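/- Let N ≥ 1 and for each i ∈ Fin N let X i be a nonempty compact metric space with its Borel σ-algebra, and let u i : (Π j, X j) → ℝ be continuous. Then a mixed-strategy Nash equilibrium exists: there is a profile μ* ∈ Π i, ProbabilityMeasure (X i) such that for every agent i and every ν ∈ ProbabilityMeasure (X i), ∫ x, u i x ∂(Measure.pi (fun j => ↑(Function.update μ* i ν j))) ≤ ∫ x, u i x ∂(Measure.pi (fun j => ↑(μ* j))). -/

import Mathlib

open MeasureTheory

/-!
A profile `μ` is an equilibrium iff the Nikaido–Isoda function
`Φ(μ, ν) = ∑ᵢ (Uᵢ(νᵢ, μ₋ᵢ) - Uᵢ(μ))` satisfies `Φ(μ, ·) ≤ 0`. The sets `{μ | Φ(μ, ν) ≤ 0}` are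
closed in a compact space, so it suffices that finitely many of them meet. Given `ν₁, …, νₙ`, let
`M(t)` be the profile of mixtures with weights `t` in the simplex. Multilinearity of `Uᵢ` gives
`∑ₖ tₖ Φ(M(t), νₖ) = 0`, and a variational inequality on the simplex yields a `t` with
`Φ(M(t), νₖ) ≤ 0` for all `k`.

That inequality is Brouwer-strength. It comes from the dual Knaster–Kuratowski–Mazurkiewicz
covering theorem, which in turn follows from Scarf's combinatorial lemma: for a finite set of
points with slack elements added, any colouring extending the natural one of the slack elements
admits a rainbow dominating set. Dominating sets of an increasingly fine net of the simplex shrink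
to points, so no triangulation is required.
-/

section Dominating

open Finset

theorem card_filter_image_erase_eq_two {α β : Type*} [DecidableEq α] [DecidableEq β]
    {s : Finset α} {f : α → β} (hs : #s = #(s.image f) + 1) :
    #{k ∈ s | (s.erase k).image f = s.image f} = 2 := by
  have image_erase_of_collision {k l : α} (hk : k ∈ s) (hl : l ∈ s) (hne : l ≠ k)
      (heq : f l = f k) : (s.erase k).image f = s.image f := by
    conv_rhs => rw [← insert_erase hk, image_insert]
    exact (insert_eq_of_mem (heq ▸ mem_image_of_mem f (mem_erase.2 ⟨hne, hl⟩))).symm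
  obtain ⟨i, hi, j, hj, hij, heq⟩ := exists_ne_map_eq_of_card_lt_of_maps_to (t := s.image f)
    (by omega) fun a ha ↦ mem_image_of_mem f ha
  refine card_eq_two.2 ⟨i, j, hij, ?_⟩
  ext k
  simp only [mem_filter, mem_insert, mem_singleton]
  constructor
  · rintro ⟨hk, himage⟩
    have hinj : Set.InjOn f (s.erase k) :=
      injOn_of_card_image_eq (by rw [himage, card_erase_of_mem hk]; omega)
    by_contra! hne
    exact hij (hinj (mem_erase.2 ⟨hne.1.symm, hi⟩) (mem_erase.2 ⟨hne.2.symm, hj⟩) heq)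
  · rintro (rfl | rfl)
    · exact ⟨hi, image_erase_of_collision hi hj hij.symm heq.symm⟩
    · exact ⟨hj, image_erase_of_collision hj hi hij heq⟩

variable {V I α : Type*} [LinearOrder α] {r : I → V → α} {D T : Finset V} {m : I → V}

/-- Scarf's notion of a dominating set: for every `x` there is a coordinate `i` in which `x` ranks
no higher than any element of `T`. -/
def IsDominating (r : I → V → α) (T : Finset V) : Prop :=
  ∀ x, ∃ i, ∀ y ∈ T, r i x ≤ r i y

/-- `m i` is an element of `D` of lowest rank in coordinate `i`, for every `i`. -/
def IsMinimizer (r : I → V → α) (D : Finset V) (m : I → V) : Prop :=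
  ∀ i, m i ∈ D ∧ ∀ y ∈ D, r i (m i) ≤ r i y

/-- The elements lying strictly above `m` in all coordinates but `k`: the region that opens up when
the `k`-th constraint of the empty orthant above `m` is released. -/
def releasedCorner (r : I → V → α) (m : I → V) (k : I) : Set V :=
  {z | ∀ l ≠ k, r l (m l) < r l z}

theorem exists_isMinimizer (r : I → V → α) (hD : D.Nonempty) : ∃ m, IsMinimizer r D m :=
  Classical.skolem.1 fun i ↦ D.exists_min_image (r i) hD

theorem notMem_of_mem_releasedCorner [Fintype I] [DecidableEq I] [DecidableEq V] {k : I}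
    (hk : (univ.erase k).image m = D) {x : V} (hx : x ∈ releasedCorner r m k) : x ∉ D := by
  rw [← hk, mem_image]
  rintro ⟨l, hl, rfl⟩
  exact (hx l (ne_of_mem_erase hl)).false

namespace IsDominating

theorem mono (hT : IsDominating r T) (hDT : D ⊆ T) : IsDominating r D := fun x ↦
  (hT x).imp fun _ hi y hy ↦ hi y (hDT hy)

theorem image_isMinimizer [Fintype I] [DecidableEq V] (hD : IsDominating r D)
    (hr : ∀ i, (r i).Injective) (hm : IsMinimizer r D m) : univ.image m = D := by
  refine Subset.antisymm (image_subset_iff.2 fun i _ ↦ (hm i).1) fun x hx ↦ ?_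
  obtain ⟨i, hi⟩ := hD x
  exact mem_image.2 ⟨i, mem_univ i, hr i (((hm i).2 x hx).antisymm (hi _ (hm i).1))⟩

theorem le_of_mem_releasedCorner (hT : IsDominating r T) (hDT : D ⊆ T) (hm : IsMinimizer r D m)
    {k : I} {z : V} (hz : z ∈ releasedCorner r m k) : ∀ y ∈ T, r k z ≤ r k y := by
  obtain ⟨l, hl⟩ := hT z
  obtain rfl : l = k := by
    by_contra hlk
    exact (hz l hlk).not_ge (hl _ (hDT (hm l).1))
  exact hl

theorem eq_of_mem_releasedCorner (hD : IsDominating r D) (hm : IsMinimizer r D m) {k l : I} {z : V}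
    (hk : z ∈ releasedCorner r m k) (hl : z ∈ releasedCorner r m l) : k = l := by
  by_contra hkl
  exact (hl k hkl).not_ge (hD.le_of_mem_releasedCorner subset_rfl hm hk _ (hm k).1)

theorem insert_of_isMaxOn [DecidableEq V] (hD : IsDominating r D) (hm : IsMinimizer r D m) {k : I}
    {x : V} (hx : x ∈ releasedCorner r m k) (hmax : IsMaxOn (r k) (releasedCorner r m k) x) :
    IsDominating r (insert x D) := by
  intro z
  simp only [forall_mem_insert]
  by_cases hz : z ∈ releasedCorner r m k
  · exact ⟨k, hmax hz, hD.le_of_mem_releasedCorner subset_rfl hm hz⟩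
  · simp only [releasedCorner, Set.mem_ofPred_eq, not_forall, not_lt] at hz
    obtain ⟨l, hlk, hzl⟩ := hz
    exact ⟨l, hzl.trans (hx l hlk).le, fun y hy ↦ hzl.trans ((hm l).2 y hy)⟩

theorem exists_isMaxOn_of_insert [Fintype I] [DecidableEq I] [DecidableEq V]
    {x : V} (hx : IsDominating r (insert x D)) (hxD : x ∉ D) (hr : ∀ i, (r i).Injective)
    (hcard : #D + 1 = Fintype.card I) (hm : IsMinimizer r D m) :
    ∃ k, (univ.erase k).image m = D ∧ x ∈ releasedCorner r m k ∧
      IsMaxOn (r k) (releasedCorner r m k) x := by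
  obtain ⟨k, hk⟩ := hx x
  have exists_index (y : V) (hy : y ∈ D) : ∃ l ≠ k, m l = y ∧ r l y < r l x := by
    have hyx : y ≠ x := ne_of_mem_of_not_mem hy hxD
    obtain ⟨l, hl⟩ := hx y
    have hlx : r l y < r l x := (hl x (mem_insert_self x D)).lt_of_ne ((hr l).ne hyx)
    refine ⟨l, ?_, hr l (((hm l).2 y hy).antisymm (hl _ (mem_insert_of_mem (hm l).1))), hlx⟩
    rintro rfl
    exact hlx.not_ge (hk y (mem_insert_of_mem hy))
  have image_eq : (univ.erase k).image m = D := by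
    refine Subset.antisymm (image_subset_iff.2 fun l _ ↦ (hm l).1) fun y hy ↦ ?_
    obtain ⟨l, hlk, hly, -⟩ := exists_index y hy
    exact mem_image.2 ⟨l, mem_erase.2 ⟨hlk, mem_univ l⟩, hly⟩
  have injOn : Set.InjOn m (univ.erase k : Finset I) := injOn_of_card_image_eq <| by
    rw [image_eq, card_erase_of_mem (mem_univ k), card_univ]
    omega
  refine ⟨k, image_eq, fun l hlk ↦ ?_, fun z hz ↦
    hx.le_of_mem_releasedCorner (subset_insert x D) hm hz x (mem_insert_self x D)⟩
  obtain ⟨l', hl'k, hl', hlt⟩ := exists_index (m l) (hm l).1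
  obtain rfl := injOn (by simpa using hl'k) (by simpa using hlk) hl'
  exact hlt

theorem card_covBy_eq_two [Fintype V] [Fintype I] (hD : IsDominating r D)
    (hr : ∀ i, (r i).Injective) (hcard : #D + 1 = Fintype.card I) (hm : IsMinimizer r D m)
    (hcorner : ∀ k, (releasedCorner r m k).Nonempty) :
    open Classical in #{T | D ⋖ T ∧ IsDominating r T} = 2 := by
  classical
  have exists_isMaxOn (k : I) :
      ∃ x ∈ releasedCorner r m k, IsMaxOn (r k) (releasedCorner r m k) x :=
    Set.exists_max_image _ (r k) (Set.toFinite _) (hcorner k)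
  choose X hX hXmax using exists_isMaxOn
  have himage := hD.image_isMinimizer hr hm
  rw [← card_filter_image_erase_eq_two (s := univ) (f := m) (by rw [himage, card_univ, hcard]),
    himage]
  symm
  refine card_bij (fun k _ ↦ insert (X k) D) (fun k hk ↦ ?_) (fun k hk l _ hkl ↦ ?_) fun T hT ↦ ?_
  · have hXk : X k ∉ D := notMem_of_mem_releasedCorner (mem_filter.1 hk).2 (hX k)
    exact mem_filter.2
      ⟨mem_univ _, covBy_insert hXk, hD.insert_of_isMaxOn hm (hX k) (hXmax k)⟩
  · have hXkl : X k = X l :=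
      (insert_inj (notMem_of_mem_releasedCorner (mem_filter.1 hk).2 (hX k))).1 hkl
    exact hD.eq_of_mem_releasedCorner hm (hX k) (hXkl ▸ hX l)
  · obtain ⟨-, hDT, hTdom⟩ := mem_filter.1 hT
    obtain ⟨x, hxD, rfl⟩ := covBy_iff_exists_insert.1 hDT
    obtain ⟨k, hk, hxk, hmax⟩ := hTdom.exists_isMaxOn_of_insert hxD hr hcard hm
    have hxX : X k = x := hr k ((hmax (hX k)).antisymm (hXmax k hxk))
    exact ⟨k, mem_filter.2 ⟨mem_univ k, hk⟩, by rw [hxX]⟩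

end IsDominating

/-- Scarf's slack elements, which close up the boundary of a finite set of points: `b i` ranks
lowest of all in coordinate `i` and above every non-slack element in the other coordinates. -/
structure IsSlack (r : I → V → α) (b : I → V) : Prop where
  lt_of_ne {i : I} {v : V} : v ≠ b i → r i (b i) < r i v
  lt_of_notMem_range {i j : I} {v : V} : v ∉ Set.range b → j ≠ i → r j v < r j (b i)

namespace IsSlack

variable {b : I → V} {c : V → I} {i₀ : I}

theorem lt_of_notMem (hb : IsSlack r b) {v : V} (hv : v ∉ Set.range b) (i : I) :
    r i (b i) < r i v :=
  hb.lt_of_ne fun hvb ↦ hv ⟨i, hvb.symm⟩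

theorem card_covBy_eq_two [Fintype V] [Fintype I] (hb : IsSlack r b) (hr : ∀ i, (r i).Injective)
    (hD : IsDominating r D) (hcard : #D + 1 = Fintype.card I) {w : V} (hwD : w ∈ D)
    (hw : w ∉ Set.range b) :
    open Classical in #{T | D ⋖ T ∧ IsDominating r T} = 2 := by
  obtain ⟨m, hm⟩ := exists_isMinimizer r ⟨w, hwD⟩
  refine hD.card_covBy_eq_two hr hcard hm fun k ↦ ⟨b k, fun l hlk ↦ ?_⟩
  exact ((hm l).2 w hwD).trans_lt (hb.lt_of_notMem_range hw hlk)

theorem isDominating_insert_image_erase_iff [Fintype I] [DecidableEq I] [DecidableEq V]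
    (hb : IsSlack r b) {x : V} :
    IsDominating r (insert x ((univ.erase i₀).image b)) ↔
      IsMaxOn (r i₀) (Set.range b)ᶜ x := by
  constructor
  · intro hdom v hv
    obtain ⟨i, hi⟩ := hdom v
    obtain rfl : i = i₀ := by
      by_contra hi₀
      have hbi : b i ∈ (univ.erase i₀).image b :=
        mem_image_of_mem b (mem_erase.2 ⟨hi₀, mem_univ i⟩)
      exact (hb.lt_of_notMem hv i).not_ge (hi _ (mem_insert_of_mem hbi))
    exact hi x (mem_insert_self _ _)
  · intro hmax v
    by_cases hv : v ∈ Set.range b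
    · obtain ⟨k, rfl⟩ := hv
      refine ⟨k, fun y _ ↦ ?_⟩
      obtain rfl | hy := eq_or_ne y (b k)
      exacts [le_rfl, (hb.lt_of_ne hy).le]
    · refine ⟨i₀, (forall_mem_insert _ _ _).2 ⟨hmax hv, forall_mem_image.2 fun k hk ↦ ?_⟩⟩
      exact (hb.lt_of_notMem_range hv (ne_of_mem_erase hk).symm).le

theorem card_covBy_image_erase_eq_one [Fintype V] [Fintype I] [DecidableEq I] [DecidableEq V]
    (hb : IsSlack r b) (hr : ∀ i, (r i).Injective) (hne : (Set.range b)ᶜ.Nonempty) (i₀ : I) :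
    open Classical in #{T | (univ.erase i₀).image b ⋖ T ∧ IsDominating r T} = 1 := by
  classical
  obtain ⟨x, hxb, hmax⟩ := Set.exists_max_image _ (r i₀) (Set.toFinite _) hne
  refine card_eq_one.2 ⟨insert x ((univ.erase i₀).image b), ?_⟩
  ext T
  simp only [mem_filter, mem_univ, true_and, mem_singleton]
  constructor
  · rintro ⟨hT, hdom⟩
    obtain ⟨z, hz, rfl⟩ := covBy_iff_exists_insert.1 hT
    have hxz : r i₀ x ≤ r i₀ z := hb.isDominating_insert_image_erase_iff.1 hdom hxb
    have hzb : z ∉ Set.range b := by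
      rintro ⟨k, rfl⟩
      obtain rfl : k = i₀ := by
        by_contra hk
        exact hz (mem_image_of_mem b (mem_erase.2 ⟨hk, mem_univ k⟩))
      exact (hb.lt_of_notMem hxb k).not_ge hxz
    rw [hr i₀ ((hmax z hzb).antisymm hxz)]
  · rintro rfl
    exact ⟨covBy_insert fun hx ↦ hxb (coe_image_subset_range hx),
      hb.isDominating_insert_image_erase_iff.2 hmax⟩

theorem even_card_covBy [Fintype V] [Fintype I] [DecidableEq I] [DecidableEq V]
    (hb : IsSlack r b) (hr : ∀ i, (r i).Injective) (hcb : c.LeftInverse b)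
    (hDc : D.image c = univ.erase i₀) (hcard : #D + 1 = Fintype.card I)
    (hD : D ≠ (univ.erase i₀).image b) :
    open Classical in Even #{T | D ⋖ T ∧ IsDominating r T} := by
  classical
  obtain ⟨w, hwD, hw⟩ : ∃ w ∈ D, w ∉ Set.range b := by
    by_contra! hrange
    refine hD (eq_of_subset_of_card_le (fun w hw ↦ ?_) ?_)
    · obtain ⟨k, rfl⟩ := hrange w hw
      have hk : c (b k) ∈ univ.erase i₀ := hDc ▸ mem_image_of_mem c hw
      exact mem_image_of_mem b (hcb k ▸ hk)
    · rw [card_image_of_injective _ hcb.injective, card_erase_of_mem (mem_univ i₀), card_univ]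
      omega
  by_cases hdom : IsDominating r D
  · rw [hb.card_covBy_eq_two hr hdom hcard hwD hw]
    exact even_two
  · rw [filter_false_of_mem fun T _ hT ↦ hdom (hT.2.mono hT.1.le)]
    exact Even.zero

end IsSlack

theorem even_card_covBy_image_eq_erase [Fintype V] [Fintype I] [DecidableEq I]
    {c : V → I} (hcard : #T = Fintype.card I) (hT : T.image c ≠ univ) (i₀ : I) :
    open Classical in Even #{D | D ⋖ T ∧ D.image c = univ.erase i₀} := by
  classical
  by_cases hTc : T.image c = univ.erase i₀
  · have hT_card : #T = #(T.image c) + 1 := by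
      rw [hTc, card_erase_add_one (mem_univ i₀), card_univ, hcard]
    suffices #{D | D ⋖ T ∧ D.image c = univ.erase i₀} = 2 from this ▸ even_two
    rw [← card_filter_image_erase_eq_two hT_card, ← hTc]
    symm
    refine card_bij (fun x _ ↦ T.erase x) (fun x hx ↦ ?_) (fun x hx y hy ↦ ?_) fun D hD ↦ ?_
    · obtain ⟨hxT, himage⟩ := mem_filter.1 hx
      exact mem_filter.2 ⟨mem_univ _, erase_covBy hxT, himage⟩
    · exact T.erase_injOn (mem_filter.1 hx).1 (mem_filter.1 hy).1
    · obtain ⟨-, hDT, himage⟩ := mem_filter.1 hD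
      obtain ⟨x, hxT, rfl⟩ := covBy_iff_exists_erase.1 hDT
      exact ⟨x, mem_filter.2 ⟨hxT, himage⟩, rfl⟩
  · suffices ∀ D, D ⋖ T → D.image c ≠ univ.erase i₀ by
      rw [filter_false_of_mem fun D _ hD ↦ this D hD.1 hD.2]
      exact Even.zero
    intro D hDT hDc
    have hsub : univ.erase i₀ ⊆ T.image c := hDc ▸ image_mono c hDT.le
    by_cases hi₀ : i₀ ∈ T.image c
    · exact hT (eq_univ_of_forall fun i ↦ by
        obtain rfl | hi := eq_or_ne i i₀
        exacts [hi₀, hsub (mem_erase.2 ⟨hi, mem_univ i⟩)])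
    · exact hTc (hsub.antisymm' (subset_erase.2 ⟨subset_univ _, hi₀⟩))

namespace IsSlack

variable [Finite V] [Fintype I] [DecidableEq I] [Nonempty I] {b : I → V} {c : V → I}

theorem exists_isDominating_image_eq_univ_of_injective (hb : IsSlack r b)
    (hr : ∀ i, (r i).Injective) (hcb : c.LeftInverse b) (hne : (Set.range b)ᶜ.Nonempty) :
    ∃ T, IsDominating r T ∧ T.image c = univ := by
  classical
  have := Fintype.ofFinite V
  by_contra! hno
  let i₀ := Classical.arbitrary I
  -- All doors but `D₀` lie below an even number of rooms, and `D₀` below exactly one; without a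
  -- rainbow room, each room lies above an even number of doors.
  let doors : Finset (Finset V) := {D | D.image c = univ.erase i₀ ∧ #D + 1 = Fintype.card I}
  let rooms : Finset (Finset V) := {T | IsDominating r T ∧ #T = Fintype.card I}
  let D₀ : Finset V := (univ.erase i₀).image b
  have hD₀ : D₀ ∈ doors := by
    refine mem_filter.2 ⟨mem_univ _, ?_, ?_⟩
    · rw [image_image, hcb.comp_eq_id, image_id]
    · rw [card_image_of_injective _ hcb.injective, card_erase_add_one (mem_univ i₀), card_univ]
  have card_iff {D T : Finset V} (h : D ⋖ T) :
      #D + 1 = Fintype.card I ↔ #T = Fintype.card I := by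
    rw [Nat.covBy_iff_add_one_eq.1 h.card_finset]
  have above (D : Finset V) (hD : D ∈ doors) :
      rooms.bipartiteAbove (· ⋖ ·) D = ({T | D ⋖ T ∧ IsDominating r T} : Finset (Finset V)) := by
    grind [bipartiteAbove]
  have below (T : Finset V) (hT : T ∈ rooms) : doors.bipartiteBelow (· ⋖ ·) T =
      ({D | D ⋖ T ∧ D.image c = univ.erase i₀} : Finset (Finset V)) := by
    grind [bipartiteBelow]
  have odd_incidences : Odd (∑ D ∈ doors, #(rooms.bipartiteAbove (· ⋖ ·) D)) := by
    rw [← add_sum_erase _ _ hD₀, above D₀ hD₀, hb.card_covBy_image_erase_eq_one hr hne i₀]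
    refine odd_one.add_even (even_sum _ fun D hD ↦ ?_)
    obtain ⟨hDne, hD⟩ := mem_erase.1 hD
    obtain ⟨-, hDc, hcard⟩ := mem_filter.1 hD
    rw [above D hD]
    exact hb.even_card_covBy hr hcb hDc hcard hDne
  have even_incidences : Even (∑ T ∈ rooms, #(doors.bipartiteBelow (· ⋖ ·) T)) := by
    refine even_sum _ fun T hT ↦ ?_
    obtain ⟨-, hdom, hcard⟩ := mem_filter.1 hT
    rw [below T hT]
    exact even_card_covBy_image_eq_erase hcard (hno T hdom) i₀
  rw [sum_card_bipartiteAbove_eq_sum_card_bipartiteBelow] at odd_incidences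
  exact Nat.not_even_iff_odd.2 odd_incidences even_incidences

theorem exists_isDominating_image_eq_univ (hb : IsSlack r b) (hcb : c.LeftInverse b)
    (hne : (Set.range b)ᶜ.Nonempty) :
    ∃ T, IsDominating r T ∧ T.image c = univ := by
  have := Fintype.ofFinite V
  -- Breaking ties lexicographically by an enumeration of `V` preserves strict inequalities.
  let rank (i : I) (v : V) : α ×ₗ Fin (Fintype.card V) := toLex (r i v, Fintype.equivFin V v)
  have hrank (i : I) : (rank i).Injective := fun v w hvw ↦
    (Fintype.equivFin V).injective (congrArg Prod.snd (toLex.injective hvw))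
  have rank_lt {i : I} {v w : V} (h : r i v < r i w) : rank i v < rank i w :=
    Prod.Lex.toLex_lt_toLex.2 (Or.inl h)
  have hb_rank : IsSlack rank b :=
    ⟨fun h ↦ rank_lt (hb.lt_of_ne h), fun h hji ↦ rank_lt (hb.lt_of_notMem_range h hji)⟩
  obtain ⟨T, hT, hTc⟩ := hb_rank.exists_isDominating_image_eq_univ_of_injective hrank hcb hne
  exact ⟨T, fun x ↦ (hT x).imp fun i hi y hy ↦ Prod.Lex.monotone_fst _ _ (hi y hy), hTc⟩

end IsSlack

end Dominating

section Simplex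

variable {I : Type*} [Fintype I]

theorem stdSimplex_apply_le_add {x : stdSimplex ℝ I} {p : I → ℝ} {e : ℝ} (hp : ∀ i, p i ≤ x i)
    (hsum : 1 ≤ ∑ i, p i + e) (i : I) : x i ≤ p i + e := by
  have single_le : x i - p i ≤ ∑ j, (x j - p j) :=
    Finset.single_le_sum (f := fun j ↦ x j - p j) (fun j _ ↦ sub_nonneg.2 (hp j))
      (Finset.mem_univ i)
  rw [Finset.sum_sub_distrib, stdSimplex.sum_eq_one] at single_le
  linarith

theorem one_le_sum_add_of_forall_exists_le [Nonempty I] {S : Set (stdSimplex ℝ I)} {δ : ℝ}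
    (hS : ∀ x, ∃ v ∈ S, dist x v < δ) {p : I → ℝ} (hp : ∀ i, 0 ≤ p i)
    (hpS : ∀ v ∈ S, ∃ i, v i ≤ p i) : 1 ≤ ∑ i, p i + Fintype.card I * δ := by
  by_contra! hlt
  have hcard : (0 : ℝ) < Fintype.card I := Nat.cast_pos.2 Fintype.card_pos
  set gap : ℝ := (1 - ∑ i, p i) / Fintype.card I with hgap
  have hδ_gap : δ < gap := by
    rw [hgap, lt_div_iff₀ hcard]
    linarith
  have hδ : 0 < δ := by
    obtain ⟨v, -, hv⟩ := hS (Classical.arbitrary _)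
    exact dist_nonneg.trans_lt hv
  let x : stdSimplex ℝ I := ⟨fun i ↦ p i + gap, fun i ↦ by linarith [hp i], by
    rw [Finset.sum_add_distrib, Finset.sum_const, Finset.card_univ, nsmul_eq_mul, hgap]
    field_simp
    ring⟩
  obtain ⟨v, hvS, hxv⟩ := hS x
  obtain ⟨i, hi⟩ := hpS v hvS
  have hdist : dist (p i + gap) (v i) ≤ dist x v := dist_le_pi_dist x.1 v.1 i
  linarith [(abs_le.1 hdist).2]

/-- The barycentric coordinates of the points of `S`, together with slack elements `Sum.inr j`
whose coordinates lie outside `[0, 1]`. -/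
noncomputable def slackCoord [DecidableEq I] (S : Set (stdSimplex ℝ I)) (i : I) : S ⊕ I → ℝ :=
  Sum.elim (fun x ↦ x.1 i) fun j ↦ if j = i then -1 else 2

theorem isSlack_slackCoord [DecidableEq I] (S : Set (stdSimplex ℝ I)) :
    IsSlack (slackCoord S) Sum.inr where
  lt_of_ne {i v} hv := by
    rcases v with x | j
    · have := stdSimplex.zero_le x.1 i
      simp only [slackCoord, Sum.elim_inl, Sum.elim_inr, if_true]
      linarith
    · have hj : j ≠ i := fun h ↦ hv (congrArg Sum.inr h)
      norm_num [slackCoord, hj]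
  lt_of_notMem_range {i j v} hv hji := by
    rcases v with x | k
    · have := stdSimplex.le_one x.1 j
      simp only [slackCoord, Sum.elim_inl, Sum.elim_inr, if_neg hji.symm]
      linarith
    · exact absurd ⟨k, rfl⟩ hv

theorem exists_isDominating_slackCoord [Nonempty I] [DecidableEq I] (c : stdSimplex ℝ I → I)
    {S : Set (stdSimplex ℝ I)} [Finite S] (hS : S.Nonempty) :
    ∃ T, IsDominating (slackCoord S) T ∧ (∃ y, Sum.inl y ∈ T) ∧
      ∀ i, Sum.inr i ∈ T ∨ ∃ z : S, Sum.inl z ∈ T ∧ c z = i := by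
  obtain ⟨v, hv⟩ := hS
  obtain ⟨T, hdom, hTc⟩ := (isSlack_slackCoord S).exists_isDominating_image_eq_univ
    (c := Sum.elim (fun x : S ↦ c x) id) (fun _ ↦ rfl) ⟨Sum.inl ⟨v, hv⟩, by simp⟩
  have color (i : I) : Sum.inr i ∈ T ∨ ∃ z : S, Sum.inl z ∈ T ∧ c z = i := by
    obtain ⟨w, hwT, hwi⟩ := Finset.mem_image.1 (hTc ▸ Finset.mem_univ i)
    rcases w with z | j
    · exact Or.inr ⟨z, hwT, hwi⟩
    · exact Or.inl ((show j = i from hwi) ▸ hwT)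
  refine ⟨T, hdom, ?_, color⟩
  obtain ⟨i, hi⟩ := hdom (Sum.inl ⟨v, hv⟩)
  obtain hiT | ⟨z, hz, -⟩ := color i
  · have : v i ≤ -1 := by simpa [slackCoord] using hi _ hiT
    linarith [stdSimplex.zero_le v i]
  · exact ⟨z, hz⟩

theorem exists_forall_mem_Icc_of_isDominating [Nonempty I] [DecidableEq I]
    {S : Set (stdSimplex ℝ I)} {δ : ℝ} (hS : ∀ x, ∃ v ∈ S, dist x v < δ) {T : Finset (S ⊕ I)}
    (hdom : IsDominating (slackCoord S) T) (hT : T.Nonempty) :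
    ∃ p : I → ℝ, (∀ z : S, Sum.inl z ∈ T → ∀ i, z.1 i ∈ Set.Icc (p i) (p i + Fintype.card I * δ)) ∧
      ∀ i, Sum.inr i ∈ T → p i = 0 := by
  let p (i : I) : ℝ := max (T.inf' hT (slackCoord S i)) 0
  have p_le {z : S} (hz : Sum.inl z ∈ T) (i : I) : p i ≤ z.1 i :=
    max_le (T.inf'_le _ hz) (stdSimplex.zero_le z.1 i)
  have hsum : 1 ≤ ∑ i, p i + Fintype.card I * δ := by
    refine one_le_sum_add_of_forall_exists_le hS (fun i ↦ le_max_right _ _) fun v hv ↦ ?_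
    obtain ⟨i, hi⟩ := hdom (Sum.inl ⟨v, hv⟩)
    exact ⟨i, le_max_of_le_left (T.le_inf' hT _ hi)⟩
  exact ⟨p, fun z hz i ↦ ⟨p_le hz i, stdSimplex_apply_le_add (p_le hz) hsum i⟩, fun i hi ↦
    max_eq_right <| (T.inf'_le _ hi).trans (by norm_num [slackCoord])⟩

theorem exists_forall_apply_le_or_dist_le_of_net [Nonempty I] (c : stdSimplex ℝ I → I)
    {S : Set (stdSimplex ℝ I)} [Finite S] {δ : ℝ} (hS : ∀ x, ∃ v ∈ S, dist x v < δ) :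
    ∃ y : stdSimplex ℝ I, ∀ i,
      y i ≤ Fintype.card I * δ ∨ ∃ z, c z = i ∧ dist y z ≤ Fintype.card I * δ := by
  classical
  obtain ⟨v, hv, hvδ⟩ := hS (Classical.arbitrary _)
  have hδ : 0 < δ := dist_nonneg.trans_lt hvδ
  obtain ⟨T, hdom, ⟨y, hyT⟩, color⟩ := exists_isDominating_slackCoord c ⟨v, hv⟩
  obtain ⟨p, mem_Icc, p_eq_zero⟩ := exists_forall_mem_Icc_of_isDominating hS hdom ⟨_, hyT⟩
  refine ⟨y, fun i ↦ (color i).imp (fun hi ↦ ?_) fun ⟨z, hzT, hzi⟩ ↦ ⟨z, hzi, ?_⟩⟩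
  · simpa only [p_eq_zero i hi, zero_add] using (mem_Icc y hyT i).2
  · refine (dist_pi_le_iff (by positivity)).2 fun j ↦ ?_
    exact (Real.dist_le_of_mem_Icc (mem_Icc y hyT j) (mem_Icc z hzT j)).trans_eq
      (add_sub_cancel_left _ _)

theorem exists_forall_apply_le_or_dist_le [Nonempty I] (c : stdSimplex ℝ I → I) {ε : ℝ}
    (hε : 0 < ε) : ∃ y : stdSimplex ℝ I, ∀ i, y i ≤ ε ∨ ∃ z, c z = i ∧ dist y z ≤ ε := by
  have hcard : (0 : ℝ) < Fintype.card I := Nat.cast_pos.2 Fintype.card_pos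
  obtain ⟨S, -, hSfin, hS⟩ :=
    finite_cover_balls_of_compact (isCompact_univ (X := stdSimplex ℝ I)) (div_pos hε hcard)
  have := hSfin.to_subtype
  have hdense (x : stdSimplex ℝ I) : ∃ v ∈ S, dist x v < ε / Fintype.card I := by
    simpa using hS (Set.mem_univ x)
  simpa only [mul_div_cancel₀ ε hcard.ne'] using exists_forall_apply_le_or_dist_le_of_net c hdense

theorem exists_forall_eq_zero_of_forall_exists_le {X J : Type*} [TopologicalSpace X]
    [CompactSpace X] [Finite J] {g : J → X → ENNReal} (hg : ∀ j, Continuous (g j))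
    (happrox : ∀ ε : ENNReal, 0 < ε → ∃ x, ∀ j, g j x ≤ ε) : ∃ x, ∀ j, g j x = 0 := by
  have := Fintype.ofFinite J
  have : Nonempty X := (happrox 1 one_pos).nonempty
  obtain ⟨x, -, hx⟩ := isCompact_univ.exists_isMinOn Set.univ_nonempty
    (Continuous.finset_sup_apply (s := Finset.univ) fun j _ ↦ hg j).continuousOn
  have sup_le (ε : ENNReal) (hε : 0 < ε) : Finset.univ.sup (g · x) ≤ ε := by
    obtain ⟨y, hy⟩ := happrox ε hε
    exact (hx (Set.mem_univ y)).trans (Finset.sup_le fun j _ ↦ hy j)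
  have sup_nonpos : Finset.univ.sup (g · x) ≤ 0 := le_of_forall_gt_imp_ge_of_dense sup_le
  exact ⟨x, fun j ↦ nonpos_iff_eq_zero.1 <|
    (Finset.le_sup (f := (g · x)) (Finset.mem_univ j)).trans sup_nonpos⟩

theorem continuous_stdSimplex_apply (i : I) : Continuous fun x : stdSimplex ℝ I ↦ x i :=
  (continuous_apply i).comp continuous_subtype_val

theorem nonempty_iInter_of_isClosed_of_faces_subset [Nonempty I] {C : I → Set (stdSimplex ℝ I)}
    (hclosed : ∀ i, IsClosed (C i)) (hcover : ⋃ i, C i = Set.univ)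
    (hface : ∀ i, {x : stdSimplex ℝ I | x i = 0} ⊆ C i) : (⋂ i, C i).Nonempty := by
  choose c hc using Set.iUnion_eq_univ_iff.1 hcover
  let g (i : I) (x : stdSimplex ℝ I) : ENNReal :=
    min (ENNReal.ofReal (x i)) (Metric.infEDist x (C i))
  have hg (i : I) : Continuous (g i) :=
    (ENNReal.continuous_ofReal.comp (continuous_stdSimplex_apply i)).min
      Metric.continuous_infEDist
  have happrox (ε : ENNReal) (hε : 0 < ε) : ∃ x, ∀ i, g i x ≤ ε := by
    obtain ⟨δ, hδ, hδε⟩ := ENNReal.lt_iff_exists_nnreal_btwn.1 hε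
    obtain ⟨y, hy⟩ := exists_forall_apply_le_or_dist_le c (ENNReal.coe_pos.1 hδ)
    refine ⟨y, fun i ↦ (min_le_iff.2 ?_).trans hδε.le⟩
    refine (hy i).imp (fun hyi ↦ ?_) fun ⟨z, hzi, hyz⟩ ↦ ?_
    · exact ENNReal.ofReal_le_of_le_toReal hyi
    · exact (Metric.infEDist_le_edist_of_mem (hzi ▸ hc z)).trans (edist_le_coe.2 hyz)
  obtain ⟨x, hx⟩ := exists_forall_eq_zero_of_forall_exists_le hg happrox
  refine ⟨x, Set.mem_iInter.2 fun i ↦ ?_⟩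
  obtain hxi | hxi := min_eq_bot.1 (hx i)
  · exact hface i ((ENNReal.ofReal_eq_zero.1 hxi).antisymm (stdSimplex.zero_le x i))
  · exact (Metric.mem_iff_infEDist_zero_of_closed (hclosed i)).2 hxi

theorem exists_forall_mul_sum_eq [Nonempty I] {g : I → stdSimplex ℝ I → ℝ}
    (hg : ∀ i, Continuous (g i)) (hg_nonneg : ∀ i x, 0 ≤ g i x) :
    ∃ x : stdSimplex ℝ I, ∀ i, x i * ∑ j, g j x = g i x := by
  have sum_mul_sum (x : stdSimplex ℝ I) : ∑ i, x i * ∑ j, g j x = ∑ i, g i x := by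
    rw [← Finset.sum_mul, stdSimplex.sum_eq_one, one_mul]
  have hclosed (i : I) : IsClosed {x : stdSimplex ℝ I | x i * ∑ j, g j x ≤ g i x} :=
    isClosed_le ((continuous_stdSimplex_apply i).mul (continuous_finsetSum _ fun j _ ↦ hg j)) (hg i)
  have hcover : ⋃ i, {x : stdSimplex ℝ I | x i * ∑ j, g j x ≤ g i x} = Set.univ := by
    refine Set.iUnion_eq_univ_iff.2 fun x ↦ ?_
    obtain ⟨i, -, hi⟩ := Finset.exists_le_of_sum_le Finset.univ_nonempty (sum_mul_sum x).le
    exact ⟨i, hi⟩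
  have hface (i : I) : {x : stdSimplex ℝ I | x i = 0} ⊆ {x | x i * ∑ j, g j x ≤ g i x} := by
    rintro x (hxi : x i = 0)
    simpa only [Set.mem_ofPred_eq, hxi, zero_mul] using hg_nonneg i x
  obtain ⟨x, hx⟩ := nonempty_iInter_of_isClosed_of_faces_subset hclosed hcover hface
  have hx_le (i : I) : x i * ∑ j, g j x ≤ g i x := Set.mem_iInter.1 hx i
  exact ⟨x, fun i ↦ (Finset.sum_eq_sum_iff_of_le fun i _ ↦ hx_le i).1 (sum_mul_sum x) i
    (Finset.mem_univ i)⟩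

theorem exists_forall_nonpos_of_sum_mul_nonpos [Nonempty I] {f : I → stdSimplex ℝ I → ℝ}
    (hf : ∀ i, Continuous (f i)) (hsum : ∀ x : stdSimplex ℝ I, ∑ i, x i * f i x ≤ 0) :
    ∃ x, ∀ i, f i x ≤ 0 := by
  obtain ⟨x, hx⟩ := exists_forall_mul_sum_eq (g := fun i x ↦ (f i x)⁺)
    (fun i ↦ (hf i).sup continuous_const) fun i x ↦ posPart_nonneg _
  have posPart_sq (i : I) : (f i x)⁺ ^ 2 = (f i x)⁺ * f i x := by
    obtain h | h := le_total (f i x) 0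
    · simp [posPart_eq_zero.2 h]
    · rw [posPart_eq_self.2 h, sq]
  have sum_sq_nonpos : ∑ i, (f i x)⁺ ^ 2 ≤ 0 := calc
    ∑ i, (f i x)⁺ ^ 2 = (∑ j, (f j x)⁺) * ∑ i, x i * f i x := by
      rw [Finset.mul_sum]
      refine Finset.sum_congr rfl fun i _ ↦ ?_
      rw [posPart_sq, ← hx i]
      ring
    _ ≤ 0 := mul_nonpos_of_nonneg_of_nonpos
      (Finset.sum_nonneg fun i _ ↦ posPart_nonneg _) (hsum x)
  refine ⟨x, fun i ↦ posPart_eq_zero.1 <| pow_eq_zero_iff two_ne_zero |>.1 ?_⟩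
  exact (Finset.sum_eq_zero_iff_of_nonneg fun i _ ↦ sq_nonneg (f i x)⁺).1
    (sum_sq_nonpos.antisymm (Finset.sum_nonneg fun i _ ↦ sq_nonneg _)) i (Finset.mem_univ i)

theorem exists_forall_nonpos_of_forall_finset {E Y : Type*} [TopologicalSpace E] [CompactSpace E]
    [Nonempty E] {F : E → Y → ℝ} (hF : ∀ y, Continuous (F · y))
    (hmix : ∀ s : Finset Y, ∃ M : stdSimplex ℝ s → E, Continuous M ∧
      ∀ t, ∑ y : s, t y * F (M t) y ≤ 0) : ∃ x, ∀ y, F x y ≤ 0 := by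
  have finite_solution (s : Finset Y) : (⋂ y ∈ s, {x | F x y ≤ 0}).Nonempty := by
    obtain rfl | hs := s.eq_empty_or_nonempty
    · simp
    have := hs.to_subtype
    obtain ⟨M, hM, hsum⟩ := hmix s
    obtain ⟨t, ht⟩ := exists_forall_nonpos_of_sum_mul_nonpos
      (f := fun (y : s) t ↦ F (M t) y) (fun y ↦ (hF y).comp hM) hsum
    exact ⟨M t, Set.mem_iInter₂.2 fun y hy ↦ ht ⟨y, hy⟩⟩
  have hclosed (y : Y) : IsClosed {x | F x y ≤ 0} := isClosed_le (hF y) continuous_const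
  obtain ⟨x, hx⟩ := CompactSpace.iInter_nonempty hclosed finite_solution
  exact ⟨x, fun y ↦ Set.mem_iInter.1 hx y⟩

end Simplex

section Mixture

variable {K : Type*} [Fintype K]

theorem integral_sum_ofReal_smul_measure {Y : Type*} [MeasurableSpace Y] (t : stdSimplex ℝ K)
    {ν : K → Measure Y} {f : Y → ℝ} (hf : ∀ k, Integrable f (ν k)) :
    ∫ y, f y ∂(∑ k, ENNReal.ofReal (t k) • ν k) = ∑ k, t k * ∫ y, f y ∂ν k := by
  rw [integral_finsetSum_measure fun k _ ↦ (hf k).smul_measure ENNReal.ofReal_ne_top]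
  refine Finset.sum_congr rfl fun k _ ↦ ?_
  rw [integral_smul_measure, ENNReal.toReal_ofReal (stdSimplex.zero_le t k), smul_eq_mul]

/-- The convex combination of finitely many probability measures `ν k` with weights `t k`. -/
noncomputable def mixture {Y : Type*} [MeasurableSpace Y] (t : stdSimplex ℝ K)
    (ν : K → ProbabilityMeasure Y) : ProbabilityMeasure Y :=
  ⟨∑ k, ENNReal.ofReal (t k) • (ν k : Measure Y), ⟨by
    simp only [Measure.finsetSum_apply, Measure.smul_apply, measure_univ, smul_eq_mul, mul_one]
    rw [← ENNReal.ofReal_sum_of_nonneg fun k _ ↦ stdSimplex.zero_le t k, stdSimplex.sum_eq_one,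
      ENNReal.ofReal_one]⟩⟩

theorem coe_mixture {Y : Type*} [MeasurableSpace Y] (t : stdSimplex ℝ K)
    (ν : K → ProbabilityMeasure Y) :
    (mixture t ν : Measure Y) = ∑ k, ENNReal.ofReal (t k) • (ν k : Measure Y) :=
  rfl

theorem continuous_mixture {Y : Type*} [MeasurableSpace Y] [TopologicalSpace Y]
    [OpensMeasurableSpace Y] (ν : K → ProbabilityMeasure Y) :
    Continuous fun t : stdSimplex ℝ K ↦ mixture t ν := by
  refine ProbabilityMeasure.continuous_iff_forall_continuous_integral.2 fun f ↦ ?_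
  simp only [coe_mixture, integral_sum_ofReal_smul_measure _ fun k ↦ f.integrable (ν k : Measure Y)]
  exact continuous_finsetSum _ fun k _ ↦ (continuous_stdSimplex_apply k).mul continuous_const

theorem pi_update_mixture {ι : Type*} [Fintype ι] [DecidableEq ι] {X : ι → Type*}
    [∀ i, MeasurableSpace (X i)] (μ : Π i, ProbabilityMeasure (X i)) (i : ι)
    (t : stdSimplex ℝ K) (ν : K → ProbabilityMeasure (X i)) :
    Measure.pi (fun j ↦ (Function.update μ i (mixture t ν) j : Measure (X j))) =
      ∑ k, ENNReal.ofReal (t k) •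
        Measure.pi (fun j ↦ (Function.update μ i (ν k) j : Measure (X j))) := by
  have prod_update (ρ : ProbabilityMeasure (X i)) (s : Π j, Set (X j)) :
      ∏ j, (Function.update μ i ρ j : Measure (X j)) (s j) =
        (ρ : Measure (X i)) (s i) * ∏ j ∈ Finset.univ.erase i, (μ j : Measure (X j)) (s j) := by
    rw [← Finset.mul_prod_erase _ _ (Finset.mem_univ i), Function.update_self]
    refine congrArg _ (Finset.prod_congr rfl fun j hj ↦ ?_)
    rw [Function.update_of_ne (Finset.ne_of_mem_erase hj)]
  refine Measure.pi_eq fun s _ ↦ ?_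
  simp only [prod_update, coe_mixture, Measure.finsetSum_apply, Measure.smul_apply, Measure.pi_pi,
    smul_eq_mul, Finset.sum_mul, mul_assoc]

end Mixture

section Game

variable {ι : Type*} [Fintype ι] {X : ι → Type*} [∀ i, MeasurableSpace (X i)]

/-- The expected payoff of a mixed profile `μ`, whose components are drawn independently. -/
noncomputable def expectedPayoff (u : (Π i, X i) → ℝ) (μ : Π i, ProbabilityMeasure (X i)) : ℝ :=
  ∫ x, u x ∂Measure.pi (fun j ↦ (μ j : Measure (X j)))

/-- The Nikaido–Isoda function of the mixed game: the total gain of the agents when each of them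
separately deviates from `μ` to `ν`. -/
noncomputable def nikaidoIsoda [DecidableEq ι] (u : ι → (Π i, X i) → ℝ)
    (μ ν : Π i, ProbabilityMeasure (X i)) : ℝ :=
  ∑ i, (expectedPayoff (u i) (Function.update μ i (ν i)) - expectedPayoff (u i) μ)

theorem nikaidoIsoda_update [DecidableEq ι] (u : ι → (Π i, X i) → ℝ)
    (μ : Π i, ProbabilityMeasure (X i)) (i : ι) (ν : ProbabilityMeasure (X i)) :
    nikaidoIsoda u μ (Function.update μ i ν) =
      expectedPayoff (u i) (Function.update μ i ν) - expectedPayoff (u i) μ := by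
  rw [nikaidoIsoda, Finset.sum_eq_single_of_mem i (Finset.mem_univ i), Function.update_self]
  intro j _ hj
  rw [Function.update_of_ne hj, Function.update_eq_self, sub_self]

variable [∀ i, TopologicalSpace (X i)] [∀ i, CompactSpace (X i)]
  [∀ i, SecondCountableTopology (X i)] [∀ i, BorelSpace (X i)]

theorem expectedPayoff_update_mixture [DecidableEq ι] {K : Type*} [Fintype K]
    {u : (Π i, X i) → ℝ} (hu : Continuous u) (μ : Π i, ProbabilityMeasure (X i)) (i : ι)
    (t : stdSimplex ℝ K) (ν : K → ProbabilityMeasure (X i)) :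
    expectedPayoff u (Function.update μ i (mixture t ν)) =
      ∑ k, t k * expectedPayoff u (Function.update μ i (ν k)) := by
  rw [expectedPayoff, pi_update_mixture]
  exact integral_sum_ofReal_smul_measure t fun k ↦
    (BoundedContinuousFunction.mkOfCompact ⟨u, hu⟩).integrable _

theorem sum_mul_nikaidoIsoda_mixture [DecidableEq ι] {K : Type*} [Fintype K]
    {u : ι → (Π i, X i) → ℝ} (hu : ∀ i, Continuous (u i)) (t : stdSimplex ℝ K)
    (ν : K → Π i, ProbabilityMeasure (X i)) :
    ∑ k, t k * nikaidoIsoda u (fun i ↦ mixture t (ν · i)) (ν k) = 0 := by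
  simp only [nikaidoIsoda, Finset.mul_sum]
  rw [Finset.sum_comm]
  refine Finset.sum_eq_zero fun i _ ↦ ?_
  simp only [mul_sub]
  rw [Finset.sum_sub_distrib, ← Finset.sum_mul, stdSimplex.sum_eq_one, one_mul,
    ← expectedPayoff_update_mixture (hu i), Function.update_eq_self, sub_self]

variable [∀ i, T2Space (X i)]

theorem continuous_expectedPayoff {u : (Π i, X i) → ℝ} (hu : Continuous u) :
    Continuous (expectedPayoff u) :=
  (ProbabilityMeasure.continuous_integral_boundedContinuousFunction
    (BoundedContinuousFunction.mkOfCompact ⟨u, hu⟩)).comp ProbabilityMeasure.continuous_pi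

theorem continuous_nikaidoIsoda_left [DecidableEq ι] {u : ι → (Π i, X i) → ℝ}
    (hu : ∀ i, Continuous (u i)) (ν : Π i, ProbabilityMeasure (X i)) :
    Continuous (nikaidoIsoda u · ν) :=
  continuous_finsetSum _ fun i _ ↦
    ((continuous_expectedPayoff (hu i)).comp (continuous_id.update i continuous_const)).sub
      (continuous_expectedPayoff (hu i))

theorem mixed_nash_exists_general [DecidableEq ι] [∀ i, Nonempty (X i)] {u : ι → (Π i, X i) → ℝ}
    (hu : ∀ i, Continuous (u i)) :
    ∃ μ : Π i, ProbabilityMeasure (X i), ∀ i (ν : ProbabilityMeasure (X i)),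
      expectedPayoff (u i) (Function.update μ i ν) ≤ expectedPayoff (u i) μ := by
  have (i : ι) : Nonempty (ProbabilityMeasure (X i)) :=
    ⟨⟨Measure.dirac (Classical.arbitrary _), inferInstance⟩⟩
  obtain ⟨μ, hμ⟩ := exists_forall_nonpos_of_forall_finset (continuous_nikaidoIsoda_left hu)
    fun s ↦ ⟨fun t i ↦ mixture t fun ν : s ↦ ν.1 i, continuous_pi fun i ↦ continuous_mixture _,
      fun t ↦ (sum_mul_nikaidoIsoda_mixture hu t Subtype.val).le⟩
  refine ⟨μ, fun i ν ↦ sub_nonpos.1 ?_⟩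
  rw [← nikaidoIsoda_update]
  exact hμ _

end Game

/-- **Glicksberg-type mixed-strategy Nash equilibrium existence.**
For finitely many agents with nonempty compact metric action spaces and continuous
payoffs, there exists a profile of mixed strategies (Borel probability measures) such
that no agent can improve its expected payoff by unilaterally deviating. -/
theorem mixed_nash_exists
    (N : ℕ) (hN : 1 ≤ N) (X : Fin N → Type*)
    [∀ i, MetricSpace (X i)] [∀ i, CompactSpace (X i)] [∀ i, Nonempty (X i)]
    [∀ i, MeasurableSpace (X i)] [∀ i, BorelSpace (X i)]
    (u : Π _ : Fin N, (Π j, X j) → ℝ) (hu : ∀ i, Continuous (u i)) :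
    ∃ μstar : Π i, ProbabilityMeasure (X i),
      ∀ i (ν : ProbabilityMeasure (X i)),
        ∫ x, u i x ∂(Measure.pi (fun j => (Function.update μstar i ν j : Measure (X j)))) ≤
        ∫ x, u i x ∂(Measure.pi (fun j => (μstar j : Measure (X j)))) :=
  mixed_nash_exists_general hu
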